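/- arXiv:2007.07941 — 8 statements merged into one kernel-verified Lean document; each statement's English description precedes it below -/
import Mathlib

section
/- On the R-module End^{-1}(V) of degree −1 graded endomorphisms of a cochain complex (V,∂), the bracket [T,S] := T∘τ(S) − S∘τ(T) (where τ(S) = ∂∘S + S∘∂) is R-bilinear, alternating ([T,T] = 0 for all T), and satisfies the Jacobi identity exactly: [[T,S],U] + [[U,T],S] + [[S,U],T] = 0 for all T,S,U ∈ End^{-1}(V). Thus (End^{-1}(V), [·,·]) is a Lie algebra over R. -/
/-!
Every `τ(S)` commutes with `∂`, since `∂∘τ(S) = ∂∘S∘∂ = τ(S)∘∂`. Hence `τ` turns the bracket into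
the commutator of degree `0` endomorphisms, `τ([T,S]) = τ(T)∘τ(S) − τ(S)∘τ(T)` (`tau_bracket`), and
`[[T,S],U] = T∘τ(S)∘τ(U) − S∘τ(T)∘τ(U) − U∘τ(T)∘τ(S) + U∘τ(S)∘τ(T)` (`bracket_bracket`).
The twelve terms of the cyclic sum cancel in pairs. Bilinearity and alternation are formal.
-/

/-!
Statement 1: On the `R`-module `End⁻¹(V)` of degree `−1` graded endomorphisms of a
cochain complex `(V, ∂)`, the bracket `[T,S] := T∘τ(S) − S∘τ(T)`
(where `τ(S) = ∂∘S + S∘∂`) is `R`-bilinear, alternating, and satisfies the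
Jacobi identity exactly; thus `(End⁻¹(V), [·,·])` is a Lie algebra over `R`.

Degree-`r` graded endomorphisms of `V` are formalized as `Cochain V V r`, and
`z₁.comp z₂ _` is the composition "`z₁` first, then `z₂`", i.e. `z₂ ∘ z₁` in
function-order notation.
-/

open CategoryTheory CochainComplex HomComplex

universe v u

variable {R : Type u} [CommRing R]

/-- The differential `∂` of a cochain complex `V`, as a graded endomorphism of
degree `1`. -/
noncomputable def Dc (V : CochainComplex (ModuleCat.{v} R) ℤ) : Cochain V V 1 :=
  Cochain.mk fun p q _ => V.d p q

/-- `τ(S) := ∂∘S + S∘∂`, a graded endomorphism of degree `0`. -/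
noncomputable def tau (V : CochainComplex (ModuleCat.{v} R) ℤ) (S : Cochain V V (-1)) :
    Cochain V V 0 :=
  S.comp (Dc V) (by omega) + (Dc V).comp S (by omega)

/-- The bracket `[T,S] := T∘τ(S) − S∘τ(T)` on `End⁻¹(V)`. -/
noncomputable def bracket (V : CochainComplex (ModuleCat.{v} R) ℤ)
    (T S : Cochain V V (-1)) : Cochain V V (-1) :=
  (tau V S).comp T (by omega) - (tau V T).comp S (by omega)

lemma Dc_comp_Dc (V : CochainComplex (ModuleCat.{v} R) ℤ) :
    (Dc V).comp (Dc V) (show (1 : ℤ) + 1 = 2 by omega) = 0 := by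
  ext p q hpq
  rw [Cochain.comp_v _ _ _ p (p + 1) q rfl (by omega)]
  simp [Dc]

lemma Dc_comp_tau (V : CochainComplex (ModuleCat.{v} R) ℤ) (S : Cochain V V (-1)) :
    (Dc V).comp (tau V S) (add_zero 1) = (tau V S).comp (Dc V) (zero_add 1) := by
  have h₁ : (Dc V).comp ((Dc V).comp S (show (1 : ℤ) + -1 = 0 by omega)) (add_zero 1) = 0 := by
    rw [← Cochain.comp_assoc (Dc V) (Dc V) S (show (1 : ℤ) + 1 = 2 by omega) (by omega) (by omega),
      Dc_comp_Dc, Cochain.zero_comp]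
  have h₂ : (S.comp (Dc V) (show (-1 : ℤ) + 1 = 0 by omega)).comp (Dc V) (zero_add 1) = 0 := by
    rw [Cochain.comp_assoc S (Dc V) (Dc V) _ (show (1 : ℤ) + 1 = 2 by omega) (by omega),
      Dc_comp_Dc, Cochain.comp_zero]
  rw [tau, Cochain.comp_add, Cochain.add_comp, h₁, h₂, add_zero, zero_add]
  exact (Cochain.comp_assoc (Dc V) S (Dc V) _ _ (by omega)).symm

lemma tau_add (V : CochainComplex (ModuleCat.{v} R) ℤ) (S S' : Cochain V V (-1)) :
    tau V (S + S') = tau V S + tau V S' := by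
  simp only [tau, Cochain.comp_add, Cochain.add_comp]
  abel

lemma tau_sub (V : CochainComplex (ModuleCat.{v} R) ℤ) (S S' : Cochain V V (-1)) :
    tau V (S - S') = tau V S - tau V S' := by
  simp only [tau, Cochain.comp_sub, Cochain.sub_comp]
  abel

lemma tau_smul (V : CochainComplex (ModuleCat.{v} R) ℤ) (a : R) (S : Cochain V V (-1)) :
    tau V (a • S) = a • tau V S := by
  simp only [tau, Cochain.comp_smul, Cochain.smul_comp, smul_add]

/-- `τ(T∘τ(S)) = τ(T)∘τ(S)`, because `τ(S)` commutes with `∂`. -/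
lemma tau_tau_comp (V : CochainComplex (ModuleCat.{v} R) ℤ) (T S : Cochain V V (-1)) :
    tau V ((tau V S).comp T (zero_add (-1))) = (tau V S).comp (tau V T) (zero_add 0) := by
  have h : (Dc V).comp ((tau V S).comp T (zero_add (-1))) (show (1 : ℤ) + -1 = 0 by omega) =
      (tau V S).comp ((Dc V).comp T (show (1 : ℤ) + -1 = 0 by omega)) (zero_add 0) := by
    rw [← Cochain.comp_assoc (Dc V) (tau V S) T (add_zero 1) (zero_add (-1)) (by omega),
      Dc_comp_tau, Cochain.comp_assoc (tau V S) (Dc V) T (zero_add 1) _ (by omega)]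
  rw [tau, h, Cochain.comp_assoc (tau V S) T (Dc V) _ (show (-1 : ℤ) + 1 = 0 by omega) (by omega),
    ← Cochain.comp_add]
  rfl

/-- `τ` sends the bracket to the commutator: `τ([T,S]) = τ(T)∘τ(S) − τ(S)∘τ(T)`. -/
lemma tau_bracket (V : CochainComplex (ModuleCat.{v} R) ℤ) (T S : Cochain V V (-1)) :
    tau V (bracket V T S) =
      (tau V S).comp (tau V T) (zero_add 0) - (tau V T).comp (tau V S) (zero_add 0) := by
  rw [bracket, tau_sub, tau_tau_comp, tau_tau_comp]

lemma bracket_bracket (V : CochainComplex (ModuleCat.{v} R) ℤ) (T S U : Cochain V V (-1)) :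
    bracket V (bracket V T S) U =
      (tau V U).comp ((tau V S).comp T (zero_add (-1))) (zero_add (-1))
        - (tau V U).comp ((tau V T).comp S (zero_add (-1))) (zero_add (-1))
        - (tau V S).comp ((tau V T).comp U (zero_add (-1))) (zero_add (-1))
        + (tau V T).comp ((tau V S).comp U (zero_add (-1))) (zero_add (-1)) := by
  rw [bracket, tau_bracket, bracket, Cochain.comp_sub, Cochain.sub_comp,
    Cochain.comp_assoc (tau V S) (tau V T) U (zero_add 0) (zero_add (-1)) (by omega),
    Cochain.comp_assoc (tau V T) (tau V S) U (zero_add 0) (zero_add (-1)) (by omega)]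
  abel

theorem stmt1 (V : CochainComplex (ModuleCat.{v} R) ℤ) :
    -- `R`-bilinearity in the first variable
    (∀ (a : R) (T T' S : Cochain V V (-1)),
      bracket V (a • T + T') S = a • bracket V T S + bracket V T' S)
    -- `R`-bilinearity in the second variable
    ∧ (∀ (a : R) (T S S' : Cochain V V (-1)),
      bracket V T (a • S + S') = a • bracket V T S + bracket V T S')
    -- alternating
    ∧ (∀ T : Cochain V V (-1), bracket V T T = 0)
    -- Jacobi identity, exactly
    ∧ (∀ T S U : Cochain V V (-1),
      bracket V (bracket V T S) U + bracket V (bracket V U T) S +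
        bracket V (bracket V S U) T = 0) := by
  refine ⟨fun a T T' S => ?_, fun a T S S' => ?_, fun T => sub_self _, fun T S U => ?_⟩
  · simp only [bracket, tau_add, tau_smul, Cochain.comp_add, Cochain.add_comp,
      Cochain.comp_smul, Cochain.smul_comp, smul_sub]
    abel
  · simp only [bracket, tau_add, tau_smul, Cochain.comp_add, Cochain.add_comp,
      Cochain.comp_smul, Cochain.smul_comp, smul_sub]
    abel
  · rw [bracket_bracket, bracket_bracket, bracket_bracket]
    abel
end

section
/- The submodule of boundaries B²(V) = {∂∘h − h∘∂ : h ∈ End^{-2}(V)} is a Lie ideal of the Lie algebra (End^{-1}(V), [·,·]). Explicitly, if T = ∂∘h − h∘∂ for some h ∈ End^{-2}(V), then for every S ∈ End^{-1}(V) one has the exact identities [T,S] = ∂∘(h∘τ(S)) − (h∘τ(S))∘∂ and [S,T] = (h∘τ(S))∘∂ − ∂∘(h∘τ(S)); in particular both brackets lie in B²(V). -/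
/-!
Since `∂ ∘ ∂ = 0`, the map `τ(S) = ∂ ∘ S + S ∘ ∂` commutes with `∂` (`Dc_comp_tau`), and `τ`
vanishes on `B²(V)` (`tau_boundary`). Hence for `T = ∂ ∘ h - h ∘ ∂` the bracket `[T, S]` reduces
to `T ∘ τ(S) = ∂ ∘ (h ∘ τ(S)) - (h ∘ τ(S)) ∘ ∂`, and `[S, T]` is its negative.
-/

/-!
Statement 2: The submodule of boundaries `B²(V) = {∂∘h − h∘∂ : h ∈ End⁻²(V)}` is a
Lie ideal of `(End⁻¹(V), [·,·])`.  Explicitly, if `T = ∂∘h − h∘∂` for some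
`h ∈ End⁻²(V)`, then for every `S ∈ End⁻¹(V)` one has the exact identities
`[T,S] = ∂∘(h∘τ(S)) − (h∘τ(S))∘∂` and `[S,T] = (h∘τ(S))∘∂ − ∂∘(h∘τ(S))`;
in particular both brackets lie in `B²(V)`.

Degree-`r` graded endomorphisms of `V` are formalized as `Cochain V V r`, and
`z₁.comp z₂ _` is the composition "`z₁` first, then `z₂`", i.e. `z₂ ∘ z₁` in
function-order notation.
-/

open CategoryTheory CochainComplex HomComplex

universe v u

variable {R : Type u} [CommRing R]

/-- Membership in `B²(V) = {∂∘h − h∘∂ : h ∈ End⁻²(V)}`. -/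
def InB2 (V : CochainComplex (ModuleCat.{v} R) ℤ) (T : Cochain V V (-1)) : Prop :=
  ∃ h : Cochain V V (-2),
    T = h.comp (Dc V) (by omega) - (Dc V).comp h (by omega)

/-- `τ` kills `B²(V)`: the two terms `∂ ∘ h ∘ ∂` cancel and the others contain `∂ ∘ ∂`. -/
lemma tau_boundary (V : CochainComplex (ModuleCat.{v} R) ℤ) (h : Cochain V V (-2)) :
    tau V (h.comp (Dc V) (show (-2 : ℤ) + 1 = -1 by omega) -
      (Dc V).comp h (show (1 : ℤ) + -2 = -1 by omega)) = 0 := by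
  unfold tau
  rw [Cochain.comp_sub, Cochain.sub_comp,
    ← Cochain.comp_assoc (Dc V) (Dc V) h (show (1 : ℤ) + 1 = 2 by omega) _ (by omega),
    Cochain.comp_assoc h (Dc V) (Dc V) _ (show (1 : ℤ) + 1 = 2 by omega) (by omega),
    Dc_comp_Dc, Cochain.zero_comp, Cochain.comp_zero,
    Cochain.comp_assoc (Dc V) h (Dc V) _ (show (-2 : ℤ) + 1 = -1 by omega) (by omega)]
  abel

theorem stmt2 (V : CochainComplex (ModuleCat.{v} R) ℤ)
    (h : Cochain V V (-2)) (T S : Cochain V V (-1))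
    -- `T = ∂∘h − h∘∂`
    (hT : T = h.comp (Dc V) (show (-2 : ℤ) + 1 = -1 by omega) -
      (Dc V).comp h (show (1 : ℤ) + -2 = -1 by omega)) :
    -- `[T,S] = ∂∘(h∘τ(S)) − (h∘τ(S))∘∂`
    bracket V T S =
      ((tau V S).comp h (show (0 : ℤ) + -2 = -2 by omega)).comp (Dc V)
          (show (-2 : ℤ) + 1 = -1 by omega) -
        (Dc V).comp ((tau V S).comp h (show (0 : ℤ) + -2 = -2 by omega))
          (show (1 : ℤ) + -2 = -1 by omega)
    -- `[S,T] = (h∘τ(S))∘∂ − ∂∘(h∘τ(S))`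
    ∧ bracket V S T =
      (Dc V).comp ((tau V S).comp h (show (0 : ℤ) + -2 = -2 by omega))
          (show (1 : ℤ) + -2 = -1 by omega) -
        ((tau V S).comp h (show (0 : ℤ) + -2 = -2 by omega)).comp (Dc V)
          (show (-2 : ℤ) + 1 = -1 by omega)
    -- in particular both brackets lie in `B²(V)`
    ∧ InB2 V (bracket V T S) ∧ InB2 V (bracket V S T) := by
  have hτ : tau V T = 0 := hT ▸ tau_boundary V h
  -- Since `τ(T) = 0`, both brackets reduce to `±T ∘ τ(S)`, and `τ(S)` moves past `∂`.
  have key : (tau V S).comp T (zero_add (-1)) =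
      ((tau V S).comp h (show (0 : ℤ) + -2 = -2 by omega)).comp (Dc V)
          (show (-2 : ℤ) + 1 = -1 by omega) -
        (Dc V).comp ((tau V S).comp h (show (0 : ℤ) + -2 = -2 by omega))
          (show (1 : ℤ) + -2 = -1 by omega) := by
    rw [hT, Cochain.comp_sub,
      ← Cochain.comp_assoc (tau V S) h (Dc V) (show (0 : ℤ) + -2 = -2 by omega) _ (by omega),
      ← Cochain.comp_assoc (tau V S) (Dc V) h (zero_add 1) _ (by omega),
      ← Cochain.comp_assoc (Dc V) (tau V S) h (add_zero 1) _ (by omega),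
      Dc_comp_tau]
  have h1 : bracket V T S = (tau V S).comp T (zero_add (-1)) := by
    rw [bracket, hτ, Cochain.zero_comp, sub_zero]
  have h2 : bracket V S T = -(tau V S).comp T (zero_add (-1)) := by
    rw [bracket, hτ, Cochain.zero_comp, zero_sub]
  refine ⟨h1.trans key, ?_, ⟨_, h1.trans key⟩,
    ⟨-(tau V S).comp h (show (0 : ℤ) + -2 = -2 by omega), ?_⟩⟩
  · rw [h2, key, neg_sub]
  · rw [h2, key, Cochain.neg_comp, Cochain.comp_neg]
    abel
end

section
/- For every degree-0 graded endomorphism R₀ of (V,∂) commuting with ∂, the map α(R₀) : S ↦ R₀∘S − S∘R₀ is a derivation of the Lie algebra (End^{-1}(V), [·,·]): for all T,S ∈ End^{-1}(V), α(R₀)([T,S]) = [α(R₀)(T), S] + [T, α(R₀)(S)], exactly. -/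
/-!
Statement 6: For every degree-`0` graded endomorphism `R₀` of `(V,∂)` commuting
with `∂`, the map `α(R₀) : S ↦ R₀∘S − S∘R₀` is a derivation of the Lie algebra
`(End⁻¹(V), [·,·])`: for all `T, S ∈ End⁻¹(V)`,
`α(R₀)([T,S]) = [α(R₀)(T), S] + [T, α(R₀)(S)]`, exactly.

Degree-`r` graded endomorphisms of `V` are formalized as `Cochain V V r`, and
`z₁.comp z₂ _` is the composition "`z₁` first, then `z₂`", i.e. `z₂ ∘ z₁` in
function-order notation.
-/

open CategoryTheory CochainComplex HomComplex

universe v u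

variable {R : Type u} [CommRing R]

/-- `α(R₀)(S) := R₀∘S − S∘R₀` for `R₀ ∈ End⁰(V)` and `S ∈ End⁻¹(V)`. -/
noncomputable def alpha (V : CochainComplex (ModuleCat.{v} R) ℤ)
    (R₀ : Cochain V V 0) (S : Cochain V V (-1)) : Cochain V V (-1) :=
  S.comp R₀ (by omega) - R₀.comp S (by omega)

/-- Since `R₀` commutes with `∂`, `τ` intertwines `α(R₀)` with the commutator by `R₀`
on `End⁰(V)`: `τ(α(R₀)(S)) = R₀∘τ(S) − τ(S)∘R₀`. -/
lemma tau_alpha (V : CochainComplex (ModuleCat.{v} R) ℤ) (R₀ : Cochain V V 0)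
    (hR₀ : (Dc V).comp R₀ (add_zero 1) =
      R₀.comp (Dc V) (zero_add 1))
    (S : Cochain V V (-1)) :
    tau V (alpha V R₀ S) =
      (tau V S).comp R₀ (add_zero 0) - R₀.comp (tau V S) (add_zero 0) := by
  simp only [tau, alpha, Cochain.sub_comp, Cochain.comp_sub, Cochain.add_comp, Cochain.comp_add,
    Cochain.comp_assoc_of_first_is_zero_cochain, Cochain.comp_assoc_of_third_is_zero_cochain]
  rw [Cochain.comp_assoc_of_second_is_zero_cochain, ← hR₀,
    ← Cochain.comp_assoc_of_second_is_zero_cochain (Dc V) R₀ S, hR₀,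
    Cochain.comp_assoc_of_first_is_zero_cochain]
  abel

theorem stmt6 (V : CochainComplex (ModuleCat.{v} R) ℤ) (R₀ : Cochain V V 0)
    -- `R₀` commutes with `∂`: `R₀∘∂ = ∂∘R₀`
    (hR₀ : (Dc V).comp R₀ (show (1 : ℤ) + 0 = 1 by omega) =
      R₀.comp (Dc V) (show (0 : ℤ) + 1 = 1 by omega))
    (T S : Cochain V V (-1)) :
    -- `α(R₀)([T,S]) = [α(R₀)(T), S] + [T, α(R₀)(S)]`
    alpha V R₀ (bracket V T S) =
      bracket V (alpha V R₀ T) S + bracket V T (alpha V R₀ S) := by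
  simp only [bracket, tau_alpha V R₀ hR₀]
  simp only [alpha, Cochain.sub_comp, Cochain.comp_sub,
    Cochain.comp_assoc_of_first_is_zero_cochain]
  abel
end

section
/- For all T,S ∈ End^{-1}(V) one has the exact Peiffer-type identity τ(T)∘S − S∘τ(T) − [T,S] = ∂∘(T∘S) − (T∘S)∘∂. In particular α(τ(T))(S) := τ(T)∘S − S∘τ(T) is congruent to [T,S] modulo the submodule of boundaries B²(V), which is the crossed-module axiom a(t(Y₁))(Y₂) = [Y₁,Y₂] for the differential Lie crossed module gl(V,∂) on the quotient gl^{-1}(V) = End^{-1}(V)/B²(V). -/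
/-!
Statement 8: For all `T, S ∈ End⁻¹(V)` one has the exact Peiffer-type identity
`τ(T)∘S − S∘τ(T) − [T,S] = ∂∘(T∘S) − (T∘S)∘∂`.  In particular
`α(τ(T))(S) := τ(T)∘S − S∘τ(T)` is congruent to `[T,S]` modulo the submodule of
boundaries `B²(V)`, which is the crossed-module axiom `a(t(Y₁))(Y₂) = [Y₁,Y₂]`
for the differential Lie crossed module `gl(V,∂)` on the quotient
`gl⁻¹(V) = End⁻¹(V)/B²(V)`.

Degree-`r` graded endomorphisms of `V` are formalized as `Cochain V V r`, and
`z₁.comp z₂ _` is the composition "`z₁` first, then `z₂`", i.e. `z₂ ∘ z₁` in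
function-order notation.
-/

open CategoryTheory CochainComplex HomComplex

universe v u

variable {R : Type u} [CommRing R]

theorem stmt8 (V : CochainComplex (ModuleCat.{v} R) ℤ) (T S : Cochain V V (-1)) :
    -- `τ(T)∘S − S∘τ(T) − [T,S] = ∂∘(T∘S) − (T∘S)∘∂`
    S.comp (tau V T) (show (-1 : ℤ) + 0 = -1 by omega) -
        (tau V T).comp S (show (0 : ℤ) + -1 = -1 by omega) -
        bracket V T S =
      (S.comp T (show (-1 : ℤ) + -1 = -2 by omega)).comp (Dc V)
          (show (-2 : ℤ) + 1 = -1 by omega) -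
        (Dc V).comp (S.comp T (show (-1 : ℤ) + -1 = -2 by omega))
          (show (1 : ℤ) + -2 = -1 by omega)
    -- in particular `α(τ(T))(S)` is congruent to `[T,S]` modulo `B²(V)`
    ∧ InB2 V (S.comp (tau V T) (show (-1 : ℤ) + 0 = -1 by omega) -
        (tau V T).comp S (show (0 : ℤ) + -1 = -1 by omega) -
        bracket V T S) := by
  -- The terms `S∘τ(T)` cancel, and so do the two copies of `T∘∂∘S`;
  -- what remains is `∂∘T∘S − T∘S∘∂`.
  have key : S.comp (tau V T) (show (-1 : ℤ) + 0 = -1 by omega) -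
        (tau V T).comp S (show (0 : ℤ) + -1 = -1 by omega) -
        bracket V T S =
      (S.comp T (show (-1 : ℤ) + -1 = -2 by omega)).comp (Dc V)
          (show (-2 : ℤ) + 1 = -1 by omega) -
        (Dc V).comp (S.comp T (show (-1 : ℤ) + -1 = -2 by omega))
          (show (1 : ℤ) + -2 = -1 by omega) := by
    rw [bracket, sub_sub_sub_cancel_right, tau, tau, Cochain.comp_add, Cochain.add_comp,
      Cochain.comp_assoc S T (Dc V) (n₁₂ := -2) (n₂₃ := 0) (n₁₂₃ := -1)
        (by omega) (by omega) (by omega),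
      Cochain.comp_assoc S (Dc V) T (n₁₂ := 0) (n₂₃ := 0) (n₁₂₃ := -1)
        (by omega) (by omega) (by omega),
      Cochain.comp_assoc (Dc V) S T (n₁₂ := 0) (n₂₃ := -2) (n₁₂₃ := -1)
        (by omega) (by omega) (by omega)]
    abel
  exact ⟨key, _, key⟩
end

section
/- Let (V,∂_V) and (W,∂_W) be cochain complexes of R-modules, ρ, ρ' : V → W degree-0 chain maps with ρ invertible with chain-map inverse ρ⁻¹, and g, g' : V → V degree-0 chain maps with g invertible with chain-map inverse g⁻¹. Suppose ξ : V → W of degree −1 satisfies ∂_W∘ξ + ξ∘∂_V = ρ − ρ' and σ : V → W of degree −1 satisfies ∂_W∘σ + σ∘∂_V = ρ∘g − ρ'∘g'. Define h := ρ⁻¹∘(ξ∘g' − σ)∘g⁻¹, a degree −1 graded endomorphism of V. Then τ(h)∘g = g', where τ(h) := id_V + ∂_V∘h + h∘∂_V, and moreover ξ∘τ(h)∘g − ρ∘h∘g = σ. -/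
/-!
Put `a := ξ∘g' − σ`, so that `h∘g = ρ⁻¹∘a`. As `g'` is a chain map, the homotopy
equations for `ξ` and `σ` give
`∂_W∘a + a∘∂_V = (ρ − ρ')∘g' − (ρ∘g − ρ'∘g') = ρ∘g' − ρ∘g`. Since `g` and `ρ⁻¹`
commute with the differentials, `τ(h)∘g = g + ρ⁻¹∘(∂_W∘a + a∘∂_V) = g + (g' − g) = g'`.
Then `ξ∘τ(h)∘g − ρ∘h∘g = ξ∘g' − a = σ`.
-/

/-!
Statement 11: Let `(V,∂_V)` and `(W,∂_W)` be cochain complexes of `R`-modules,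
`ρ, ρ' : V → W` degree-`0` chain maps with `ρ` invertible with chain-map inverse
`ρ⁻¹`, and `g, g' : V → V` degree-`0` chain maps with `g` invertible with
chain-map inverse `g⁻¹`.  Suppose `ξ : V → W` of degree `−1` satisfies
`∂_W∘ξ + ξ∘∂_V = ρ − ρ'` and `σ : V → W` of degree `−1` satisfies
`∂_W∘σ + σ∘∂_V = ρ∘g − ρ'∘g'`.  Define `h := ρ⁻¹∘(ξ∘g' − σ)∘g⁻¹`, a degree `−1`
graded endomorphism of `V`.  Then `τ(h)∘g = g'`, where
`τ(h) := id_V + ∂_V∘h + h∘∂_V`, and moreover `ξ∘τ(h)∘g − ρ∘h∘g = σ`.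

Degree-`r` graded maps `V → W` are formalized as `Cochain V W r`, and
`z₁.comp z₂ _` is the composition "`z₁` first, then `z₂`", i.e. `z₂ ∘ z₁` in
function-order notation.
-/

open CategoryTheory CochainComplex HomComplex

universe v u

variable {R : Type u} [CommRing R]

/-- `τ(h) := id_V + ∂_V∘h + h∘∂_V`, for `h` a degree `−1` graded endomorphism. -/
noncomputable def tauGrp (V : CochainComplex (ModuleCat.{v} R) ℤ)
    (h : Cochain V V (-1)) : Cochain V V 0 :=
  Cochain.ofHom (𝟙 V) + h.comp (Dc V) (by omega) + (Dc V).comp h (by omega)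

theorem stmt11 (V W : CochainComplex (ModuleCat.{v} R) ℤ)
    (ρ ρ' : Cochain V W 0) (ρinv : Cochain W V 0)
    -- `ρ`, `ρ'` and `ρ⁻¹` are chain maps
    (hρ : (Dc V).comp ρ (show (1 : ℤ) + 0 = 1 by omega) =
      ρ.comp (Dc W) (show (0 : ℤ) + 1 = 1 by omega))
    (hρ' : (Dc V).comp ρ' (show (1 : ℤ) + 0 = 1 by omega) =
      ρ'.comp (Dc W) (show (0 : ℤ) + 1 = 1 by omega))
    (hρinv : (Dc W).comp ρinv (show (1 : ℤ) + 0 = 1 by omega) =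
      ρinv.comp (Dc V) (show (0 : ℤ) + 1 = 1 by omega))
    -- `ρ⁻¹` is a two-sided inverse of `ρ`
    (hρ₁ : ρ.comp ρinv (show (0 : ℤ) + 0 = 0 by omega) = Cochain.ofHom (𝟙 V))
    (hρ₂ : ρinv.comp ρ (show (0 : ℤ) + 0 = 0 by omega) = Cochain.ofHom (𝟙 W))
    (g g' : Cochain V V 0) (ginv : Cochain V V 0)
    -- `g`, `g'` and `g⁻¹` are chain maps
    (hg : (Dc V).comp g (show (1 : ℤ) + 0 = 1 by omega) =
      g.comp (Dc V) (show (0 : ℤ) + 1 = 1 by omega))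
    (hg' : (Dc V).comp g' (show (1 : ℤ) + 0 = 1 by omega) =
      g'.comp (Dc V) (show (0 : ℤ) + 1 = 1 by omega))
    (hginv : (Dc V).comp ginv (show (1 : ℤ) + 0 = 1 by omega) =
      ginv.comp (Dc V) (show (0 : ℤ) + 1 = 1 by omega))
    -- `g⁻¹` is a two-sided inverse of `g`
    (hg₁ : g.comp ginv (show (0 : ℤ) + 0 = 0 by omega) = Cochain.ofHom (𝟙 V))
    (hg₂ : ginv.comp g (show (0 : ℤ) + 0 = 0 by omega) = Cochain.ofHom (𝟙 V))
    -- `ξ` is a homotopy: `∂_W∘ξ + ξ∘∂_V = ρ − ρ'`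
    (ξ : Cochain V W (-1))
    (hξ : ξ.comp (Dc W) (show (-1 : ℤ) + 1 = 0 by omega) +
      (Dc V).comp ξ (show (1 : ℤ) + -1 = 0 by omega) = ρ - ρ')
    -- `σ` is a homotopy: `∂_W∘σ + σ∘∂_V = ρ∘g − ρ'∘g'`
    (σ : Cochain V W (-1))
    (hσ : σ.comp (Dc W) (show (-1 : ℤ) + 1 = 0 by omega) +
        (Dc V).comp σ (show (1 : ℤ) + -1 = 0 by omega) =
      g.comp ρ (show (0 : ℤ) + 0 = 0 by omega) -
        g'.comp ρ' (show (0 : ℤ) + 0 = 0 by omega))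
    -- `h := ρ⁻¹∘(ξ∘g' − σ)∘g⁻¹`
    (h : Cochain V V (-1))
    (hh : h = (ginv.comp (g'.comp ξ (show (0 : ℤ) + -1 = -1 by omega) - σ)
        (show (0 : ℤ) + -1 = -1 by omega)).comp ρinv
        (show (-1 : ℤ) + 0 = -1 by omega)) :
    -- `τ(h)∘g = g'`
    g.comp (tauGrp V h) (show (0 : ℤ) + 0 = 0 by omega) = g'
    -- and `ξ∘τ(h)∘g − ρ∘h∘g = σ`
    ∧ (g.comp (tauGrp V h) (show (0 : ℤ) + 0 = 0 by omega)).comp ξ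
          (show (0 : ℤ) + -1 = -1 by omega) -
        (g.comp h (show (0 : ℤ) + -1 = -1 by omega)).comp ρ
          (show (-1 : ℤ) + 0 = -1 by omega) = σ := by
  -- `a` is the middle factor of `h`; since `g⁻¹` cancels, `h∘g = ρ⁻¹∘a`.
  obtain ⟨a, ha⟩ : ∃ a : Cochain V W (-1),
      a = g'.comp ξ (show (0 : ℤ) + -1 = -1 by omega) - σ := ⟨_, rfl⟩
  rw [← ha] at hh
  have hgh : g.comp h (show (0 : ℤ) + -1 = -1 by omega) =
      a.comp ρinv (show (-1 : ℤ) + 0 = -1 by omega) := by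
    rw [hh, ← Cochain.comp_assoc_of_third_is_zero_cochain,
      ← Cochain.comp_assoc_of_first_is_zero_cochain, hg₁, Cochain.id_comp]
  have hbd : a.comp (Dc W) (show (-1 : ℤ) + 1 = 0 by omega) +
      (Dc V).comp a (show (1 : ℤ) + -1 = 0 by omega) =
      g'.comp ρ (show (0 : ℤ) + 0 = 0 by omega) -
        g.comp ρ (show (0 : ℤ) + 0 = 0 by omega) := by
    have e : g'.comp (ξ.comp (Dc W) (show (-1 : ℤ) + 1 = 0 by omega)) (zero_add 0) +
        g'.comp ((Dc V).comp ξ (show (1 : ℤ) + -1 = 0 by omega)) (zero_add 0) =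
        g'.comp ρ (zero_add 0) - g'.comp ρ' (zero_add 0) := by
      rw [← Cochain.comp_add, hξ, Cochain.comp_sub]
    have e₁ : (Dc V).comp (g'.comp ξ (show (0 : ℤ) + -1 = -1 by omega))
        (show (1 : ℤ) + -1 = 0 by omega) =
        g'.comp ((Dc V).comp ξ (show (1 : ℤ) + -1 = 0 by omega)) (zero_add 0) := by
      rw [← Cochain.comp_assoc_of_second_is_zero_cochain, hg',
        Cochain.comp_assoc_of_first_is_zero_cochain]
    rw [ha, Cochain.sub_comp, Cochain.comp_sub, e₁,
      Cochain.comp_assoc_of_first_is_zero_cochain, sub_add_sub_comm, e, hσ]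
    abel
  have hτ : g.comp (tauGrp V h) (show (0 : ℤ) + 0 = 0 by omega) = g' := by
    have e₁ : g.comp (h.comp (Dc V) (show (-1 : ℤ) + 1 = 0 by omega)) (zero_add 0) =
        (a.comp (Dc W) (show (-1 : ℤ) + 1 = 0 by omega)).comp ρinv (zero_add 0) := by
      rw [← Cochain.comp_assoc_of_first_is_zero_cochain, hgh,
        Cochain.comp_assoc_of_second_is_zero_cochain, ← hρinv,
        Cochain.comp_assoc_of_third_is_zero_cochain]
    have e₂ : g.comp ((Dc V).comp h (show (1 : ℤ) + -1 = 0 by omega)) (zero_add 0) =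
        ((Dc V).comp a (show (1 : ℤ) + -1 = 0 by omega)).comp ρinv (zero_add 0) := by
      rw [← Cochain.comp_assoc_of_first_is_zero_cochain, ← hg,
        Cochain.comp_assoc_of_second_is_zero_cochain, hgh,
        Cochain.comp_assoc_of_third_is_zero_cochain]
    rw [tauGrp, Cochain.comp_add, Cochain.comp_add, Cochain.comp_id, e₁, e₂, add_assoc,
      ← Cochain.add_comp, hbd, Cochain.sub_comp,
      Cochain.comp_assoc_of_third_is_zero_cochain,
      Cochain.comp_assoc_of_third_is_zero_cochain, hρ₁, Cochain.comp_id, Cochain.comp_id]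
    abel
  refine ⟨hτ, ?_⟩
  rw [hτ, hgh, Cochain.comp_assoc_of_third_is_zero_cochain, hρ₂, Cochain.comp_id, ha]
  abel
end

section
/- Let A be a unital Banach algebra over ℝ, a : ℝ → A continuous, and let g(t) := Σ_{n≥0} f_n(t) with f₀ = 1, f_{n+1}(t) = ∫₀ᵗ a(s)·f_n(s) ds (so g' = a·g, g(0) = 1, and each g(t) is invertible). For fixed s ≥ 0 define p₀(t) := 1 and p_{n+1}(t) := ∫ₛᵗ a(u)·p_n(u) du for t ≥ s. Then the two-point series Σ_{n≥0} p_n(t) converges absolutely and equals the propagator g(t)·g(s)⁻¹, i.e. g(t)·g(s)⁻¹ = 1 + Σ_{n≥1} ∫_{t ≥ t₁ ≥ ⋯ ≥ t_n ≥ s} a(t₁)⋯a(t_n) dt₁⋯dt_n. -/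
/-!
The two-point series with base point `c` is written `G c t := ∑' n, iter a c n t`, where
`iter a c` are the Picard iterates started at `c`.  The bound
`‖iter a c n t‖ ≤ ‖1‖ (M |t - c|) ^ n / n!`, valid where `‖a‖ ≤ M` (`norm_iter_le`), makes the
series converge locally uniformly together with its termwise derivative, so `G c` solves
`x' = a x` with `G c c = 1` (`hasDerivAt_tsum_iter`).  For any `r`, both `t ↦ G c t` and
`t ↦ G r t * G c r` solve this linear equation and they agree at `t = r`; uniqueness of solutions
gives the cocycle identity `G c t = G r t * G c r` (`tsum_iter_mul`).  Taking `t = c` shows that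
`G r c` and `G c r` are mutually inverse, and `c = 0`, `r = s` gives the propagator formula.
-/

namespace PathOrdered

open MeasureTheory Set
open scoped Interval

variable {A : Type*} [NormedRing A] [NormedAlgebra ℝ A]

/-- The iterated integrals of `a` with base point `c`:
`iter a c n t = ∫_{t ≥ t₁ ≥ ⋯ ≥ t_n ≥ c} a(t₁)⋯a(t_n)` (with oriented integrals when `t < c`). -/
noncomputable def iter (a : ℝ → A) (c : ℝ) : ℕ → ℝ → A
  | 0, _ => 1
  | n + 1, t => ∫ u in c..t, a u * iter a c n u

theorem iter_zero (a : ℝ → A) (c t : ℝ) : iter a c 0 t = 1 := rfl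

theorem iter_succ (a : ℝ → A) (c : ℝ) (n : ℕ) (t : ℝ) :
    iter a c (n + 1) t = ∫ u in c..t, a u * iter a c n u := rfl

theorem eq_iter {a : ℝ → A} {c : ℝ} {f : ℕ → ℝ → A} (h0 : ∀ t, f 0 t = 1)
    (hsucc : ∀ n t, f (n + 1) t = ∫ u in c..t, a u * f n u) : f = iter a c := by
  funext n
  induction n with
  | zero => funext t; exact h0 t
  | succ n ih => funext t; rw [hsucc, ih, iter_succ]

theorem continuous_iter {a : ℝ → A} (ha : Continuous a) (c : ℝ) (n : ℕ) :
    Continuous (iter a c n) := by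
  induction n with
  | zero => exact continuous_const
  | succ n ih =>
    exact intervalIntegral.continuous_primitive
      (fun _ _ => (ha.mul ih).intervalIntegrable _ _) c

theorem norm_iter_le {a : ℝ → A} (ha : Continuous a) {R M c : ℝ} (hc : c ∈ Ioo (-R) R)
    (hM : ∀ u ∈ Ioo (-R) R, ‖a u‖ ≤ M) (n : ℕ) :
    ∀ t ∈ Ioo (-R) R, ‖iter a c n t‖ ≤ ‖(1 : A)‖ * ((M * |t - c|) ^ n / n.factorial) := by
  have hM0 : 0 ≤ M := (norm_nonneg _).trans (hM c hc)
  induction n with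
  | zero => intro t _; simp [iter_zero]
  | succ n ih =>
    intro t ht
    have hsub : Ι c t ⊆ Ioo (-R) R :=
      uIoc_subset_uIcc.trans (ordConnected_Ioo.uIcc_subset hc ht)
    calc ‖iter a c (n + 1) t‖ ≤ ∫ u in Ι c t, ‖a u * iter a c n u‖ :=
          intervalIntegral.norm_integral_le_integral_norm_uIoc
      _ ≤ ∫ u in Ι c t, ‖(1 : A)‖ * M ^ (n + 1) / n.factorial * |u - c| ^ n := by
          refine setIntegral_mono_on ?_ ?_ measurableSet_uIoc fun u hu => ?_
          · exact intervalIntegrable_iff.1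
              ((ha.mul (continuous_iter ha c n)).norm.intervalIntegrable _ _)
          · exact intervalIntegrable_iff.1
              ((by fun_prop : Continuous fun u : ℝ =>
                ‖(1 : A)‖ * M ^ (n + 1) / n.factorial * |u - c| ^ n).intervalIntegrable _ _)
          · calc ‖a u * iter a c n u‖ ≤ ‖a u‖ * ‖iter a c n u‖ := norm_mul_le _ _
              _ ≤ M * (‖(1 : A)‖ * ((M * |u - c|) ^ n / n.factorial)) :=
                mul_le_mul (hM u (hsub hu)) (ih u (hsub hu)) (norm_nonneg _) hM0
              _ = _ := by rw [mul_pow]; ring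
      _ = ‖(1 : A)‖ * ((M * |t - c|) ^ (n + 1) / (n + 1).factorial) := by
          rw [integral_const_mul, integral_pow_abs_sub_uIoc, Nat.factorial_succ]
          push_cast
          rw [mul_pow]
          field_simp

/-- An open interval `(-R, R)` containing three given points on which `a` is bounded. -/
theorem exists_bound {E : Type*} [NormedAddCommGroup E] {a : ℝ → E} (ha : Continuous a) (x y z : ℝ) :
    ∃ R M : ℝ, x ∈ Ioo (-R) R ∧ y ∈ Ioo (-R) R ∧ z ∈ Ioo (-R) R ∧
      ∀ u ∈ Ioo (-R) R, ‖a u‖ ≤ M := by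
  have hx := abs_nonneg x
  have hy := abs_nonneg y
  have hz := abs_nonneg z
  obtain ⟨M, hM⟩ := (isCompact_Icc (a := -(|x| + |y| + |z| + 1))
    (b := |x| + |y| + |z| + 1)).exists_bound_of_continuousOn ha.continuousOn
  refine ⟨|x| + |y| + |z| + 1, M, ?_, ?_, ?_, fun u hu => hM u (Ioo_subset_Icc_self hu)⟩ <;>
  · refine abs_lt.1 ?_
    linarith

theorem summable_norm_iter {a : ℝ → A} (ha : Continuous a) (c t : ℝ) :
    Summable fun n => ‖iter a c n t‖ := by
  obtain ⟨R, M, hc, ht, -, hM⟩ := exists_bound ha c t t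
  exact Summable.of_nonneg_of_le (fun _ => norm_nonneg _)
    (fun n => norm_iter_le ha hc hM n t ht)
    ((Real.summable_pow_div_factorial (M * |t - c|)).mul_left _)

theorem tsum_iter_self (a : ℝ → A) (c : ℝ) : ∑' n, iter a c n c = 1 := by
  rw [tsum_eq_single 0, iter_zero]
  intro n hn
  obtain ⟨m, rfl⟩ := Nat.exists_eq_succ_of_ne_zero hn
  rw [Nat.succ_eq_add_one, iter_succ, intervalIntegral.integral_same]

variable [CompleteSpace A]

theorem hasDerivAt_tsum_iter {a : ℝ → A} (ha : Continuous a) (c t : ℝ) :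
    HasDerivAt (fun t => ∑' n, iter a c n t) (a t * ∑' n, iter a c n t) t := by
  obtain ⟨R, M, hc, ht, -, hM⟩ := exists_bound ha c t t
  have hM0 : 0 ≤ M := (norm_nonneg _).trans (hM c hc)
  have hsum : ∀ t, Summable fun n => iter a c n t := fun t => (summable_norm_iter ha c t).of_norm
  have hsum1 : Summable fun n => iter a c (n + 1) c :=
    (summable_nat_add_iff (f := fun n => iter a c n c) 1).2 (hsum c)
  have key : HasDerivAt (fun t => ∑' n, iter a c (n + 1) t) (∑' n, a t * iter a c n t) t := by
    have hu : Summable fun n : ℕ => M * (‖(1 : A)‖ * ((M * (2 * R)) ^ n / n.factorial)) :=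
      ((Real.summable_pow_div_factorial (M * (2 * R))).mul_left ‖(1 : A)‖).mul_left M
    refine hasDerivAt_tsum_of_isPreconnected (g := fun n t => iter a c (n + 1) t)
      (g' := fun n t => a t * iter a c n t) hu
      isOpen_Ioo isPreconnected_Ioo (fun n y _ => ?_) (fun n y hy => ?_) hc
      hsum1 ht
    · have hcont := ha.mul (continuous_iter ha c n)
      exact intervalIntegral.integral_hasDerivAt_right (hcont.intervalIntegrable _ _)
        (hcont.stronglyMeasurableAtFilter _ _) hcont.continuousAt
    · have hyc : |y - c| ≤ 2 * R := by
        rw [abs_le]; constructor <;> linarith [hy.1, hy.2, hc.1, hc.2]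
      refine (norm_mul_le _ _).trans ?_
      refine mul_le_mul (hM y hy) ((norm_iter_le ha hc hM n y hy).trans ?_) (norm_nonneg _) hM0
      gcongr
  rw [(hsum t).tsum_mul_left] at key
  have heq : (fun t => ∑' n, iter a c n t) = fun t => 1 + ∑' n, iter a c (n + 1) t := by
    funext t
    rw [(hsum t).tsum_eq_zero_add, iter_zero]
  have := key.const_add (1 : A)
  rwa [← heq] at this

/-- The cocycle identity `G c t = G r t * G c r`, from uniqueness for the linear ODE `x' = a x`. -/
theorem tsum_iter_mul {a : ℝ → A} (ha : Continuous a) (c r t : ℝ) :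
    ∑' n, iter a c n t = (∑' n, iter a r n t) * ∑' n, iter a c n r := by
  obtain ⟨R, M, hr, ht, -, hM⟩ := exists_bound ha r t t
  have hM0 : 0 ≤ M := (norm_nonneg _).trans (hM r hr)
  refine ODE_solution_unique_of_mem_Ioo (v := fun t x => a t * x) (s := fun _ => univ)
    (K := ⟨M, hM0⟩) (f := fun t => ∑' n, iter a c n t)
    (g := fun t => (∑' n, iter a r n t) * ∑' n, iter a c n r) (fun u hu => ?_) hr
    (fun u _ => ⟨hasDerivAt_tsum_iter ha c u, mem_univ _⟩) (fun u _ => ⟨?_, mem_univ _⟩) ?_ ht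
  · refine LipschitzOnWith.of_dist_le_mul fun x _ y _ => ?_
    rw [dist_eq_norm, dist_eq_norm, ← mul_sub]
    exact (norm_mul_le _ _).trans (mul_le_mul_of_nonneg_right (hM u hu) (norm_nonneg _))
  · have := (hasDerivAt_tsum_iter ha r u).mul_const (∑' n, iter a c n r)
    rwa [mul_assoc] at this
  · simp only [tsum_iter_self, one_mul]

end PathOrdered

/-!
Statement 15: Let `A` be a unital Banach algebra over `ℝ`, `a : ℝ → A`
continuous, and let `g(t) := Σ_{n≥0} f_n(t)` with `f₀ = 1`,
`f_{n+1}(t) = ∫₀ᵗ a(s)·f_n(s) ds` (so `g' = a·g`, `g(0) = 1`, and each `g(t)`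
is invertible).  For fixed `s ≥ 0` define `p₀(t) := 1` and
`p_{n+1}(t) := ∫ₛᵗ a(u)·p_n(u) du` for `t ≥ s`.  Then the two-point series
`Σ_{n≥0} p_n(t)` converges absolutely and equals the propagator `g(t)·g(s)⁻¹`,
i.e. `g(t)·g(s)⁻¹ = 1 + Σ_{n≥1} ∫_{t ≥ t₁ ≥ ⋯ ≥ t_n ≥ s} a(t₁)⋯a(t_n) dt`.
-/

theorem stmt15 {A : Type*} [NormedRing A] [NormedAlgebra ℝ A] [CompleteSpace A]
    (a : ℝ → A) (ha : Continuous a)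
    (f : ℕ → ℝ → A)
    (hf0 : ∀ t : ℝ, f 0 t = 1)
    (hfsucc : ∀ (n : ℕ) (t : ℝ), f (n + 1) t = ∫ u in (0 : ℝ)..t, a u * f n u)
    (s : ℝ) (hs : 0 ≤ s)
    (p : ℕ → ℝ → A)
    (hp0 : ∀ t : ℝ, p 0 t = 1)
    (hpsucc : ∀ (n : ℕ) (t : ℝ), p (n + 1) t = ∫ u in s..t, a u * p n u) :
    -- `g(s)` is invertible
    IsUnit (∑' n : ℕ, f n s)
    ∧ ∀ t : ℝ, s ≤ t →
        -- the two-point series converges absolutely ...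
        (Summable fun n : ℕ => ‖p n t‖)
        -- ... and equals the propagator `g(t)·g(s)⁻¹`
        ∧ (∑' n : ℕ, p n t) =
            (∑' n : ℕ, f n t) * Ring.inverse (∑' n : ℕ, f n s) := by
  obtain rfl := PathOrdered.eq_iter hf0 hfsucc
  obtain rfl := PathOrdered.eq_iter hp0 hpsucc
  have h1 := PathOrdered.tsum_iter_mul ha 0 s 0
  have h2 := PathOrdered.tsum_iter_mul ha s 0 s
  rw [PathOrdered.tsum_iter_self] at h1 h2
  have hu : IsUnit (∑' n, PathOrdered.iter a 0 n s) := ⟨⟨_, _, h2.symm, h1.symm⟩, rfl⟩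
  refine ⟨hu, fun t _ => ⟨PathOrdered.summable_norm_iter ha s t, ?_⟩⟩
  rw [PathOrdered.tsum_iter_mul ha 0 s t, mul_assoc, Ring.mul_inverse_cancel _ hu, mul_one]
end

section
/- Let A be a unital Banach algebra over ℝ. Let β : [0,1] → A be continuous, let P : [0,1] → A be continuously differentiable with P(0) = 1 and P(s) invertible for every s ∈ [0,1], and let h : [0,1] → A be differentiable with h(0) = 1 and h'(s) = β(s) + h(s)·P(s)⁻¹·P'(s) for all s ∈ [0,1]. Then for every s ∈ [0,1] the function s ↦ h(s)·P(s)⁻¹ is differentiable with derivative β(s)·P(s)⁻¹, and consequently h(1) = (1 + ∫₀¹ β(s)·P(s)⁻¹ ds)·P(1). -/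
/-!
Differentiating the inverse gives `Q' = -Q P' Q`, so in
`(h Q)' = h' Q + h Q' = (β + h Q P') Q - h Q P' Q = β Q` the terms containing `P'` cancel.
Integrating over `[0,1]`, with `h 0 = 1` and `Q 0 = 1`, yields `h 1 * Q 1 = 1 + ∫ β Q`;
multiplying by `P 1` on the right gives the endpoint formula.
-/

/-- The derivative of a pointwise inverse, for a function that is invertible only on the set `S`. -/
theorem hasDerivWithinAt_of_mul_eq_one {A : Type*} [NormedRing A] [NormedAlgebra ℝ A]
    [CompleteSpace A] {P Q : ℝ → A} {p : A} {S : Set ℝ} {s : ℝ} (hs : s ∈ S)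
    (hP : HasDerivWithinAt P p S s)
    (hQP : ∀ u ∈ S, Q u * P u = 1 ∧ P u * Q u = 1) :
    HasDerivWithinAt Q (-(Q s * p * Q s)) S s := by
  -- `Q` is only known to be the inverse of `P` on `S`, where it agrees with `Ring.inverse ∘ P`.
  have hQ : ∀ u ∈ S, Q u = Ring.inverse (P u) := fun u hu =>
    (Ring.inverse_unit (⟨P u, Q u, (hQP u hu).2, (hQP u hu).1⟩ : Aˣ)).symm
  have hinv := hasFDerivAt_ringInverse (𝕜 := ℝ)
    (⟨P s, Q s, (hQP s hs).2, (hQP s hs).1⟩ : Aˣ)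
  have hcomp := HasFDerivAt.comp_hasDerivWithinAt s hinv hP
  refine (hcomp.congr hQ (hQ s hs)).congr_deriv ?_
  simp

/-!
Statement 16: Let `A` be a unital Banach algebra over `ℝ`.  Let `β : [0,1] → A`
be continuous, let `P : [0,1] → A` be continuously differentiable with
`P(0) = 1` and `P(s)` invertible for every `s ∈ [0,1]` (with inverse `Q(s)`),
and let `h : [0,1] → A` be differentiable with `h(0) = 1` and
`h'(s) = β(s) + h(s)·P(s)⁻¹·P'(s)` for all `s ∈ [0,1]`.  Then for every
`s ∈ [0,1]` the function `s ↦ h(s)·P(s)⁻¹` is differentiable with derivative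
`β(s)·P(s)⁻¹`, and consequently `h(1) = (1 + ∫₀¹ β(s)·P(s)⁻¹ ds)·P(1)`.
-/

theorem stmt16 {A : Type*} [NormedRing A] [NormedAlgebra ℝ A] [CompleteSpace A]
    (β P P' Q h : ℝ → A)
    (hβ : ContinuousOn β (Set.Icc 0 1))
    -- `P` is continuously differentiable on `[0,1]`, with derivative `P'`
    (hP : ∀ s ∈ Set.Icc (0 : ℝ) 1, HasDerivWithinAt P (P' s) (Set.Icc 0 1) s)
    (hP' : ContinuousOn P' (Set.Icc 0 1))
    (hP0 : P 0 = 1)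
    -- `Q s = P(s)⁻¹`: each `P s` is invertible with two-sided inverse `Q s`
    (hQP : ∀ s ∈ Set.Icc (0 : ℝ) 1, Q s * P s = 1 ∧ P s * Q s = 1)
    -- `h` is differentiable with `h'(s) = β(s) + h(s)·P(s)⁻¹·P'(s)`
    (hh : ∀ s ∈ Set.Icc (0 : ℝ) 1,
      HasDerivWithinAt h (β s + h s * Q s * P' s) (Set.Icc 0 1) s)
    (hh0 : h 0 = 1) :
    -- `s ↦ h(s)·P(s)⁻¹` is differentiable with derivative `β(s)·P(s)⁻¹`
    (∀ s ∈ Set.Icc (0 : ℝ) 1,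
      HasDerivWithinAt (fun u : ℝ => h u * Q u) (β s * Q s) (Set.Icc 0 1) s)
    -- and consequently `h(1) = (1 + ∫₀¹ β(s)·P(s)⁻¹ ds)·P(1)`
    ∧ h 1 = (1 + ∫ s in (0 : ℝ)..1, β s * Q s) * P 1 := by
  have hderiv : ∀ s ∈ Set.Icc (0 : ℝ) 1,
      HasDerivWithinAt (fun u : ℝ => h u * Q u) (β s * Q s) (Set.Icc 0 1) s := by
    intro s hs
    refine ((hh s hs).mul (hasDerivWithinAt_of_mul_eq_one hs (hP s hs) hQP)).congr_deriv ?_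
    noncomm_ring
  refine ⟨hderiv, ?_⟩
  have hQcont : ContinuousOn Q (Set.Icc 0 1) := fun s hs =>
    (hasDerivWithinAt_of_mul_eq_one hs (hP s hs) hQP).continuousWithinAt
  have hint : IntervalIntegrable (fun s => β s * Q s) MeasureTheory.volume 0 1 :=
    (hβ.mul hQcont).intervalIntegrable_of_Icc zero_le_one
  have hftc := intervalIntegral.integral_eq_sub_of_hasDerivAt_of_le zero_le_one
    (fun s hs => (hderiv s hs).continuousWithinAt)
    (fun s hs => (hderiv s (Set.Ioo_subset_Icc_self hs)).hasDerivAt (Icc_mem_nhds hs.1 hs.2)) hint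
  have hQ0 : Q 0 = 1 := by
    simpa [hP0] using (hQP 0 (by simp)).1
  rw [hftc, hh0, hQ0, mul_one, add_sub_cancel, mul_assoc, (hQP 1 (by simp)).1, mul_one]
end

section
/- Let A be a unital Banach algebra over ℝ and a, b : [0,1] → A continuous. Let g(t) := Σ_{n≥0} f_n(t) with f₀ = 1, f_{n+1}(t) = ∫₀ᵗ a(s)·f_n(s) ds (so g' = a·g, g(0) = 1, and each g(t) is invertible). For m, n ≥ 0 define the iterated integral with one insertion of b: w_{n,0}(t) := ∫₀ᵗ b(s)·f_n(s) ds and w_{n,m+1}(t) := ∫₀ᵗ a(s)·w_{n,m}(s) ds, so that w_{n,m}(1) = ∫_{1 ≥ t₁ ≥ ⋯ ≥ t_{m+n+1} ≥ 0} a(t₁)⋯a(t_m)·b(t_{m+1})·a(t_{m+2})⋯a(t_{m+n+1}) dt₁⋯dt_{m+n+1}. Then the double series Σ_{m,n≥0} w_{n,m}(1) converges absolutely and Σ_{m,n≥0} w_{n,m}(1) = g(1)·∫₀¹ g(s)⁻¹·b(s)·g(s) ds. -/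
/-!
Write `g = ∑ f_n` and `W = ∑ w_{n,m}` (sum over all pairs). The usual factorial bounds
(`iterate_bound`) dominate both series uniformly on `[0,1]` by summable constants, so the sums are
continuous and may be exchanged with the integrals (`hasSum_integral_mul`). Peeling off the terms
`f_0` and `w_{n,0}` then gives the integral equations `g = 1 + ∫ a g` and `W = ∫ b g + ∫ a W`,
hence `g' = a g` and `W' = b g + a W` on `(0,1)`.

A left inverse `h` of `g` solves `h' = -h a`, `h(0) = 1`; it is the same kind of series for `-a` in
the opposite algebra, and `(h g)' = 0` (`exists_left_inverse`). It is also a right inverse: the set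
of times where `g h = 1` is closed, contains `0`, and is open because the units of `A` are
(`mul_eq_one_of_left_inverse`). Finally `(h W)' = h b g`, so `h(1) W(1) = ∫ h b g`, and multiplying
by `g(1)` on the left gives the claim.
-/

open Set MeasureTheory

section Primitive

variable {E : Type*} [NormedAddCommGroup E]

lemma intervalIntegrable_of_continuousOn_unit {c : ℝ → E} (hc : ContinuousOn c (Icc 0 1))
    {t : ℝ} (ht : t ∈ Icc (0 : ℝ) 1) : IntervalIntegrable c volume 0 t := by
  apply ContinuousOn.intervalIntegrable
  rw [uIcc_of_le ht.1]
  exact hc.mono (Icc_subset_Icc_right ht.2)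

variable [NormedSpace ℝ E]

lemma continuousOn_primitive_unit {c : ℝ → E} (hc : ContinuousOn c (Icc 0 1)) :
    ContinuousOn (fun t => ∫ s in (0 : ℝ)..t, c s) (Icc 0 1) := by
  have h := intervalIntegral.continuousOn_primitive_interval (a := 0) (b := 1) (f := c)
    (μ := volume)
  rw [uIcc_of_le zero_le_one] at h
  exact h hc.integrableOn_Icc

lemma hasDerivAt_primitive_unit [CompleteSpace E] {c : ℝ → E} (hc : ContinuousOn c (Icc 0 1))
    {t : ℝ} (ht : t ∈ Ioo (0 : ℝ) 1) :
    HasDerivAt (fun t => ∫ s in (0 : ℝ)..t, c s) (c t) t :=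
  intervalIntegral.integral_hasDerivAt_right
    (intervalIntegrable_of_continuousOn_unit hc (Ioo_subset_Icc_self ht))
    ((hc.mono Ioo_subset_Icc_self).stronglyMeasurableAtFilter isOpen_Ioo t ht)
    (hc.continuousAt (Icc_mem_nhds ht.1 ht.2))

end Primitive

section Series

variable {A : Type*} [NormedRing A]

lemma exists_bound_unit {a : ℝ → A} (ha : ContinuousOn a (Icc 0 1)) :
    ∃ M, 0 ≤ M ∧ ∀ t ∈ Icc (0 : ℝ) 1, ‖a t‖ ≤ M := by
  obtain ⟨M, hM⟩ := isCompact_Icc.exists_bound_of_continuousOn ha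
  exact ⟨M, (norm_nonneg _).trans (hM 0 (by simp)), hM⟩

variable [NormedAlgebra ℝ A]

/-- Iterating `u ↦ ∫₀ᵗ a u` gains a factor `M t / (m + 1)` in norm at each step. -/
lemma iterate_bound {a : ℝ → A} (ha : ContinuousOn a (Icc 0 1)) {M C : ℝ} (hM0 : 0 ≤ M)
    (hM : ∀ t ∈ Icc (0 : ℝ) 1, ‖a t‖ ≤ M)
    {u : ℕ → ℝ → A} (hu0 : ContinuousOn (u 0) (Icc 0 1))
    (hC : ∀ t ∈ Icc (0 : ℝ) 1, ‖u 0 t‖ ≤ C)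
    (hu : ∀ (m : ℕ) (t : ℝ), u (m + 1) t = ∫ s in (0 : ℝ)..t, a s * u m s) (m : ℕ) :
    ContinuousOn (u m) (Icc 0 1) ∧
      ∀ t ∈ Icc (0 : ℝ) 1, ‖u m t‖ ≤ C * (M ^ m / m.factorial) * t ^ m := by
  induction m with
  | zero => simpa using ⟨hu0, fun t h0 h1 => hC t ⟨h0, h1⟩⟩
  | succ m ih =>
    obtain ⟨hc, hb⟩ := ih
    have hfun : u (m + 1) = fun t => ∫ s in (0 : ℝ)..t, a s * u m s := funext (hu m)
    refine ⟨hfun ▸ continuousOn_primitive_unit (ha.mul hc), fun t ht => ?_⟩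
    rw [hu m t]
    have hle : ‖∫ s in (0 : ℝ)..t, a s * u m s‖ ≤
        ∫ s in (0 : ℝ)..t, M * (C * (M ^ m / m.factorial)) * s ^ m := by
      refine intervalIntegral.norm_integral_le_of_norm_le ht.1 (ae_of_all _ fun s hs => ?_)
        (Continuous.intervalIntegrable (by fun_prop) _ _)
      have hs' : s ∈ Icc (0 : ℝ) 1 := ⟨hs.1.le, hs.2.trans ht.2⟩
      calc ‖a s * u m s‖ ≤ ‖a s‖ * ‖u m s‖ := norm_mul_le _ _
        _ ≤ M * (C * (M ^ m / m.factorial) * s ^ m) :=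
          mul_le_mul (hM s hs') (hb s hs') (norm_nonneg _) hM0
        _ = _ := by ring
    refine hle.trans (le_of_eq ?_)
    rw [intervalIntegral.integral_const_mul, integral_pow, Nat.factorial_succ]
    push_cast
    field_simp
    simp only [zero_pow (Nat.succ_ne_zero m), sub_zero]
    ring

/-- The time-independent form of `iterate_bound`. -/
lemma iterate_bound_const {a : ℝ → A} (ha : ContinuousOn a (Icc 0 1)) {M C : ℝ} (hM0 : 0 ≤ M)
    (hM : ∀ t ∈ Icc (0 : ℝ) 1, ‖a t‖ ≤ M) (hC0 : 0 ≤ C)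
    {u : ℕ → ℝ → A} (hu0 : ContinuousOn (u 0) (Icc 0 1))
    (hC : ∀ t ∈ Icc (0 : ℝ) 1, ‖u 0 t‖ ≤ C)
    (hu : ∀ (m : ℕ) (t : ℝ), u (m + 1) t = ∫ s in (0 : ℝ)..t, a s * u m s) (m : ℕ) :
    ContinuousOn (u m) (Icc 0 1) ∧
      ∀ t ∈ Icc (0 : ℝ) 1, ‖u m t‖ ≤ C * (M ^ m / m.factorial) := by
  obtain ⟨hc, hb⟩ := iterate_bound ha hM0 hM hu0 hC hu m
  refine ⟨hc, fun t ht => (hb t ht).trans ?_⟩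
  exact mul_le_of_le_one_right (by positivity) (pow_le_one₀ ht.1 ht.2)

variable [CompleteSpace A]

lemma hasSum_integral_mul {ι : Type*} [Countable ι] {c : ℝ → A} (hc : ContinuousOn c (Icc 0 1))
    {v : ι → ℝ → A} (hv : ∀ i, ContinuousOn (v i) (Icc 0 1)) {β : ι → ℝ} (hβ : Summable β)
    (hvβ : ∀ i, ∀ t ∈ Icc (0 : ℝ) 1, ‖v i t‖ ≤ β i) {t : ℝ} (ht : t ∈ Icc (0 : ℝ) 1) :
    HasSum (fun i => ∫ s in (0 : ℝ)..t, c s * v i s)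
      (∫ s in (0 : ℝ)..t, c s * ∑' i, v i s) := by
  obtain ⟨M, hM0, hM⟩ := exists_bound_unit hc
  have hsub : ∀ s ∈ uIoc 0 t, s ∈ Icc (0 : ℝ) 1 := fun s hs => by
    rw [uIoc_of_le ht.1] at hs
    exact ⟨hs.1.le, hs.2.trans ht.2⟩
  refine intervalIntegral.hasSum_integral_of_dominated_convergence (fun i _ => M * β i)
    (fun i => ?_) (fun i => ae_of_all _ fun s hs => ?_)
    (ae_of_all _ fun s _ => hβ.mul_left M) intervalIntegrable_const
    (ae_of_all _ fun s hs => ?_)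
  · exact ((hc.mul (hv i)).mono hsub).aestronglyMeasurable measurableSet_uIoc
  · exact (norm_mul_le _ _).trans
      (mul_le_mul (hM s (hsub s hs)) (hvβ i s (hsub s hs)) (norm_nonneg _) hM0)
  · exact (Summable.of_norm_bounded hβ fun i => hvβ i s (hsub s hs)).hasSum.mul_left _

/-- The sum `g` of the iterated integrals of `a` solves `g' = a g`, `g(0) = 1`. -/
lemma series_ode {a : ℝ → A} (ha : ContinuousOn a (Icc 0 1)) {f : ℕ → ℝ → A}
    (hf0 : ∀ t : ℝ, f 0 t = 1)
    (hfsucc : ∀ (n : ℕ) (t : ℝ), f (n + 1) t = ∫ s in (0 : ℝ)..t, a s * f n s) :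
    ContinuousOn (fun t => ∑' n, f n t) (Icc 0 1) ∧ (∑' n, f n 0) = 1 ∧
      ∀ t ∈ Ioo (0 : ℝ) 1, HasDerivAt (fun t => ∑' n, f n t) (a t * ∑' n, f n t) t := by
  obtain ⟨M, hM0, hM⟩ := exists_bound_unit ha
  have hfb := iterate_bound_const ha hM0 hM (norm_nonneg (1 : A)) (u := f)
    (by simpa [funext hf0] using continuousOn_const) (fun t _ => by rw [hf0]) hfsucc
  have hβ : Summable fun n : ℕ => ‖(1 : A)‖ * (M ^ n / n.factorial) :=
    (Real.summable_pow_div_factorial M).mul_left _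
  have hcont : ContinuousOn (fun t => ∑' n, f n t) (Icc 0 1) :=
    continuousOn_tsum (fun n => (hfb n).1) hβ fun n t ht => (hfb n).2 t ht
  have heq : ∀ t ∈ Icc (0 : ℝ) 1,
      ∑' n, f n t = 1 + ∫ s in (0 : ℝ)..t, a s * ∑' n, f n s := by
    intro t ht
    rw [(Summable.of_norm_bounded hβ fun n => (hfb n).2 t ht).tsum_eq_zero_add, hf0]
    simp only [hfsucc]
    rw [(hasSum_integral_mul ha (fun n => (hfb n).1) hβ (fun n => (hfb n).2) ht).tsum_eq]
  refine ⟨hcont, by simpa using heq 0 (by simp), fun t ht => ?_⟩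
  refine ((hasDerivAt_primitive_unit (ha.mul hcont) ht).const_add 1).congr_of_eventuallyEq ?_
  filter_upwards [Icc_mem_nhds ht.1 ht.2] with s hs using heq s hs

/-- A solution of `g' = a g`, `g(0) = 1` has a continuous left inverse `h` with `h' = -h a`. -/
lemma exists_left_inverse {a g : ℝ → A} (ha : ContinuousOn a (Icc 0 1))
    (hg : ContinuousOn g (Icc 0 1)) (hg0 : g 0 = 1)
    (hg' : ∀ t ∈ Ioo (0 : ℝ) 1, HasDerivAt g (a t * g t) t) :
    ∃ h : ℝ → A, ContinuousOn h (Icc 0 1) ∧ h 0 = 1 ∧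
      (∀ t ∈ Ioo (0 : ℝ) 1, HasDerivAt h (-(h t * a t)) t) ∧
      ∀ t ∈ Icc (0 : ℝ) 1, h t * g t = 1 := by
  -- in `Aᵐᵒᵖ`, the equation `h' = -h a` reads `h' = (-a) h`
  let a' : ℝ → Aᵐᵒᵖ := fun t => MulOpposite.op (-a t)
  have ha' : ContinuousOn a' (Icc 0 1) := MulOpposite.continuous_op.comp_continuousOn ha.neg
  let F : ℕ → ℝ → Aᵐᵒᵖ := fun n =>
    Nat.rec (fun _ => 1) (fun _ u t => ∫ s in (0 : ℝ)..t, a' s * u s) n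
  obtain ⟨hc, h0, hd⟩ := series_ode (f := F) ha' (fun _ => rfl) (fun _ _ => rfl)
  let h : ℝ → A := fun t => MulOpposite.unop (∑' n, F n t)
  have hhc : ContinuousOn h (Icc 0 1) := MulOpposite.continuous_unop.comp_continuousOn hc
  have hh0 : h 0 = 1 := by simp [h, h0]
  have hhd : ∀ t ∈ Ioo (0 : ℝ) 1, HasDerivAt h (-(h t * a t)) t := by
    intro t ht
    have := ((MulOpposite.opContinuousLinearEquiv ℝ (M := A)).symm :
      Aᵐᵒᵖ →L[ℝ] A).hasFDerivAt.comp_hasDerivAt t (hd t ht)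
    exact this.congr_deriv (by simp [h, a'])
  refine ⟨h, hhc, hh0, hhd, fun t ht => ?_⟩
  have hint := intervalIntegral.integral_eq_sub_of_hasDerivAt_of_le (f := fun s => h s * g s)
    (f' := fun _ => 0) ht.1 ((hhc.mul hg).mono (Icc_subset_Icc_right ht.2))
    (fun s hs => by
      have hs' : s ∈ Ioo (0 : ℝ) 1 := ⟨hs.1, hs.2.trans_le ht.2⟩
      exact ((hhd s hs').mul (hg' s hs')).congr_deriv (by noncomm_ring))
    intervalIntegrable_const
  simp only [intervalIntegral.integral_zero, hh0, hg0, mul_one] at hint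
  exact (sub_eq_zero.mp hint.symm)

/-- A continuous left inverse along `[0,1]` that is a two-sided inverse at `0` is two-sided
everywhere. -/
lemma mul_eq_one_of_left_inverse {g h : ℝ → A} (hg : ContinuousOn g (Icc 0 1))
    (hh : ContinuousOn h (Icc 0 1)) (h0 : g 0 * h 0 = 1)
    (hhg : ∀ t ∈ Icc (0 : ℝ) 1, h t * g t = 1) :
    ∀ t ∈ Icc (0 : ℝ) 1, g t * h t = 1 := by
  have hclosed : IsClosed ({t | g t * h t = 1} ∩ Icc (0 : ℝ) 1) := by
    rw [inter_comm]
    exact (hg.mul hh).preimage_isClosed_of_isClosed isClosed_Icc (isClosed_singleton (x := 1))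
  refine fun t ht => hclosed.Icc_subset_of_forall_mem_nhdsWithin h0 ?_ ht
  rintro x ⟨hx, hx01⟩
  have hxI : x ∈ Icc (0 : ℝ) 1 := Ico_subset_Icc_self hx01
  have hunit : IsUnit (g x) := ⟨⟨g x, h x, hx, hhg x hxI⟩, rfl⟩
  have hle : nhdsWithin x (Ioi x) ≤ nhdsWithin x (Icc 0 1) :=
    nhdsWithin_le_of_mem
      (Filter.mem_of_superset (Ioc_mem_nhdsGT hx01.2) fun y hy => ⟨hx01.1.trans hy.1.le, hy.2⟩)
  have hev := hle ((hg x hxI).eventually_mem (Units.isOpen.mem_nhds hunit))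
  filter_upwards [hev, hle self_mem_nhdsWithin] with y hy hyI
  obtain ⟨u, hu⟩ := hy
  have h1 := hhg y hyI
  rw [← hu] at h1
  change g y * h y = 1
  rw [← hu, Units.mul_eq_one_iff_eq_inv.mp h1, Units.mul_inv]

end Series

theorem stmt17 {A : Type*} [NormedRing A] [NormedAlgebra ℝ A] [CompleteSpace A]
    (a b : ℝ → A)
    (ha : ContinuousOn a (Set.Icc 0 1)) (hb : ContinuousOn b (Set.Icc 0 1))
    (f : ℕ → ℝ → A)
    (hf0 : ∀ t : ℝ, f 0 t = 1)
    (hfsucc : ∀ (n : ℕ) (t : ℝ), f (n + 1) t = ∫ s in (0 : ℝ)..t, a s * f n s)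
    (w : ℕ → ℕ → ℝ → A)
    (hw0 : ∀ (n : ℕ) (t : ℝ), w n 0 t = ∫ s in (0 : ℝ)..t, b s * f n s)
    (hwsucc : ∀ (n m : ℕ) (t : ℝ), w n (m + 1) t = ∫ s in (0 : ℝ)..t, a s * w n m s) :
    -- the double series `Σ_{m,n} w_{n,m}(1)` converges absolutely ...
    (Summable fun q : ℕ × ℕ => ‖w q.1 q.2 1‖)
    -- ... and equals `g(1)·∫₀¹ g(s)⁻¹·b(s)·g(s) ds`
    ∧ (∑' q : ℕ × ℕ, w q.1 q.2 1) =
        (∑' n : ℕ, f n 1) *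
          ∫ s in (0 : ℝ)..1,
            Ring.inverse (∑' n : ℕ, f n s) * b s * (∑' n : ℕ, f n s) := by
  obtain ⟨M, hM0, hM⟩ := exists_bound_unit ha
  obtain ⟨N, hN0, hN⟩ := exists_bound_unit hb
  have hfb := iterate_bound_const ha hM0 hM (norm_nonneg (1 : A)) (u := f)
    (by simpa [funext hf0] using continuousOn_const) (fun t _ => by rw [hf0]) hfsucc
  have hβ : Summable fun n : ℕ => ‖(1 : A)‖ * (M ^ n / n.factorial) :=
    (Real.summable_pow_div_factorial M).mul_left _
  have hw0c : ∀ n, ContinuousOn (w n 0) (Icc 0 1) := fun n => by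
    rw [funext (hw0 n)]
    exact continuousOn_primitive_unit (hb.mul (hfb n).1)
  have hw0b : ∀ n, ∀ t ∈ Icc (0 : ℝ) 1,
      ‖w n 0 t‖ ≤ N * (‖(1 : A)‖ * (M ^ n / n.factorial)) := by
    intro n t ht
    have hK : 0 ≤ N * (‖(1 : A)‖ * (M ^ n / n.factorial)) := by positivity
    rw [hw0]
    refine (intervalIntegral.norm_integral_le_of_norm_le_const
      (C := N * (‖(1 : A)‖ * (M ^ n / n.factorial))) fun s hs => ?_).trans ?_
    · rw [uIoc_of_le ht.1] at hs
      have hs' : s ∈ Icc (0 : ℝ) 1 := ⟨hs.1.le, hs.2.trans ht.2⟩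
      exact (norm_mul_le _ _).trans
        (mul_le_mul (hN s hs') ((hfb n).2 s hs') (norm_nonneg _) hN0)
    · rw [sub_zero, abs_of_nonneg ht.1]
      exact mul_le_of_le_one_right hK ht.2
  have hwb := fun n => iterate_bound_const ha hM0 hM
    (by positivity : 0 ≤ N * (‖(1 : A)‖ * (M ^ n / n.factorial)))
    (u := w n) (hw0c n) (hw0b n) (hwsucc n)
  let γ : ℕ × ℕ → ℝ := fun q =>
    N * (‖(1 : A)‖ * (M ^ q.1 / q.1.factorial)) * (M ^ q.2 / q.2.factorial)
  have hγ : Summable γ :=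
    (hβ.mul_left N).mul_of_nonneg (Real.summable_pow_div_factorial M)
      (fun n => by positivity) (fun n => by positivity)
  have hwc : ∀ q : ℕ × ℕ, ContinuousOn (w q.1 q.2) (Icc 0 1) := fun q => (hwb q.1 q.2).1
  have hwγ : ∀ q : ℕ × ℕ, ∀ t ∈ Icc (0 : ℝ) 1, ‖w q.1 q.2 t‖ ≤ γ q :=
    fun q => (hwb q.1 q.2).2
  have one_mem : (1 : ℝ) ∈ Icc (0 : ℝ) 1 := by simp
  refine ⟨Summable.of_nonneg_of_le (fun _ => norm_nonneg _) (fun q => hwγ q 1 one_mem) hγ, ?_⟩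
  obtain ⟨hgc, hg0, hgd⟩ := series_ode ha hf0 hfsucc
  obtain ⟨h, hhc, hh0, hhd, hhg⟩ := exists_left_inverse ha hgc hg0 hgd
  have hgh := mul_eq_one_of_left_inverse hgc hhc (by simp [hg0, hh0]) hhg
  set g : ℝ → A := fun t => ∑' n, f n t with hg
  set W : ℝ → A := fun t => ∑' q : ℕ × ℕ, w q.1 q.2 t with hW
  have hWc : ContinuousOn W (Icc 0 1) := continuousOn_tsum hwc hγ hwγ
  have hWeq : ∀ t ∈ Icc (0 : ℝ) 1,
      W t = (∫ s in (0 : ℝ)..t, b s * g s) + ∫ s in (0 : ℝ)..t, a s * W s := by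
    intro t ht
    have hs : Summable fun q : ℕ × ℕ => w q.1 q.2 t :=
      Summable.of_norm_bounded hγ fun q => hwγ q t ht
    have h1 := hasSum_integral_mul hb (fun n => (hfb n).1) hβ (fun n => (hfb n).2) ht
    have h2 := hasSum_integral_mul ha hwc hγ hwγ ht
    simp only [← hw0] at h1
    simp only [← hwsucc] at h2
    calc W t = ∑' n, ∑' m, w n m t := hs.tsum_prod
      _ = ∑' n, (w n 0 t + ∑' m, w n (m + 1) t) :=
        tsum_congr fun n => (hs.prod_factor n).tsum_eq_zero_add
      _ = ∑' n, w n 0 t + ∑' n, ∑' m, w n (m + 1) t := h1.summable.tsum_add h2.summable.prod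
      _ = ∑' n, w n 0 t + ∑' q : ℕ × ℕ, w q.1 (q.2 + 1) t := by rw [h2.summable.tsum_prod]
      _ = _ := by rw [h1.tsum_eq, h2.tsum_eq]
  have hWd : ∀ t ∈ Ioo (0 : ℝ) 1, HasDerivAt W (b t * g t + a t * W t) t := by
    intro t ht
    refine ((hasDerivAt_primitive_unit (hb.mul hgc) ht).add
      (hasDerivAt_primitive_unit (ha.mul hWc) ht)).congr_of_eventuallyEq ?_
    filter_upwards [Icc_mem_nhds ht.1 ht.2] with s hs using hWeq s hs
  have hint := intervalIntegral.integral_eq_sub_of_hasDerivAt_of_le (f := fun s => h s * W s)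
    (f' := fun s => h s * b s * g s) zero_le_one (hhc.mul hWc)
    (fun s hs => by
      exact ((hhd s hs).mul (hWd s hs)).congr_deriv (by noncomm_ring))
    (intervalIntegrable_of_continuousOn_unit ((hhc.mul hb).mul hgc) one_mem)
  have hW0 : W 0 = 0 := by simpa using hWeq 0 (by simp)
  have hinv : ∀ s ∈ Icc (0 : ℝ) 1, Ring.inverse (g s) = h s := fun s hs =>
    Ring.inverse_unit ⟨g s, h s, hgh s hs, hhg s hs⟩
  have hcongr : ∫ s in (0 : ℝ)..1, Ring.inverse (g s) * b s * g s =
      ∫ s in (0 : ℝ)..1, h s * b s * g s := by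
    refine intervalIntegral.integral_congr fun s hs => ?_
    rw [uIcc_of_le zero_le_one] at hs
    simp only [hinv s hs]
  change W 1 = g 1 * ∫ s in (0 : ℝ)..1, Ring.inverse (g s) * b s * g s
  rw [hcongr, hint, hW0, mul_zero, sub_zero, ← mul_assoc, hgh 1 one_mem, one_mul]
end
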